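/- Let u ∈ ℝ[x_1,…,x_d] have total degree at most 4, let v ∈ P_A, and let w ∈ P_A satisfy w(a) = u(a) and ∇w(a) = ∇u(a) at every vertex a of K. Then for every pair of indices i ≠ j, ∫_K ∂²(u − w)/∂x_i∂x_j · ∂²v/∂x_i∂x_j dx = 0. -/

import Mathlib

open MvPolynomial MeasureTheory

/-- `Q₁`: the span of the monomials `x^α` with `α i ≤ 1` for every `i`. -/
noncomputable def Q1 (d : ℕ) : Submodule ℝ (MvPolynomial (Fin d) ℝ) :=
  Submodule.span ℝ {p | ∃ α : Fin d →₀ ℕ, (∀ i, α i ≤ 1) ∧ p = monomial α (1 : ℝ)}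

/-- The Adini shape function space `P_A = Q₁ + span{x_i² q : 1 ≤ i ≤ d, q ∈ Q₁}`. -/
noncomputable def PA (d : ℕ) : Submodule ℝ (MvPolynomial (Fin d) ℝ) :=
  Q1 d ⊔ Submodule.span ℝ {p | ∃ i : Fin d, ∃ q ∈ Q1 d, p = X i ^ 2 * q}

/-- `Q₁^i`: elements of `Q₁` of degree 0 in `x_i`. -/
noncomputable def Q1i (d : ℕ) (i : Fin d) : Submodule ℝ (MvPolynomial (Fin d) ℝ) :=
  Submodule.span ℝ
    {p | ∃ α : Fin d →₀ ℕ, (∀ j, α j ≤ 1) ∧ α i = 0 ∧ p = monomial α (1 : ℝ)}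

/-- `S^i = span{((x_j − c_j)² − h_j²) q̂ : 1 ≤ j ≤ d, q̂ ∈ Q₁^i}`. -/
noncomputable def Si (d : ℕ) (c h : Fin d → ℝ) (i : Fin d) :
    Submodule ℝ (MvPolynomial (Fin d) ℝ) :=
  Submodule.span ℝ
    {p | ∃ j : Fin d, ∃ q ∈ Q1i d i, p = ((X j - C (c j)) ^ 2 - C (h j ^ 2)) * q}

/-- The vertices of the `d`-rectangle with centre `c` and half-lengths `h`. -/
def IsVertex {d : ℕ} (c h : Fin d → ℝ) (a : Fin d → ℝ) : Prop :=
  ∀ i, a i = c i - h i ∨ a i = c i + h i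

/-- The `d`-rectangle `K = ∏_i [c_i − h_i, c_i + h_i]`. -/
def box {d : ℕ} (c h : Fin d → ℝ) : Set (Fin d → ℝ) :=
  Set.univ.pi fun i => Set.Icc (c i - h i) (c i + h i)

/-- The iterated partial derivative `∂^α`. -/
noncomputable def pderivPow {d : ℕ} (α : Fin d → ℕ) :
    MvPolynomial (Fin d) ℝ →ₗ[ℝ] MvPolynomial (Fin d) ℝ :=
  (List.ofFn fun i : Fin d =>
    ((pderiv (R := ℝ) i).toLinearMap :
        Module.End ℝ (MvPolynomial (Fin d) ℝ)) ^ α i).prod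

/-!
Write `bᵢ = (xᵢ - cᵢ)² - hᵢ²`, a polynomial that vanishes at every vertex. Since `xᵢ²` and `bᵢ`
differ by an affine polynomial in `xᵢ`, every polynomial of degree at most `4` lies in `P_A` up to a
combination of products `bₖ bₗ`, and these products have zero value and gradient at the vertices.
Writing elements of `P_A` as `q₀ + ∑ bᵢ qᵢ` with multilinear `q₀, qᵢ` shows that the vertex data
determine them, so `u - w` is itself a combination of products `bₖ bₗ`. Hence `∂ᵢ∂ⱼ(u - w)` is a
multiple of `(xᵢ - cᵢ)(xⱼ - cⱼ)`, while every monomial of `∂ᵢ∂ⱼv` omits `xᵢ` or `xⱼ`. The integrand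
is therefore a sum of two functions, one odd about the hyperplane `xᵢ = cᵢ` and the other odd about
`xⱼ = cⱼ`.
-/

section RestrictSupport

variable {σ R : Type*} [CommSemiring R] {s t : Set (σ →₀ ℕ)} {p : MvPolynomial σ R}

lemma restrictSupport_union :
    restrictSupport R (s ∪ t) = restrictSupport R s ⊔ restrictSupport R t := by
  simp only [restrictSupport_eq_span, Set.image_union, Submodule.span_union]

lemma pderiv_mem_restrictSupport (hp : p ∈ restrictSupport R s) (i : σ) :
    pderiv i p ∈ restrictSupport R {m | m + Finsupp.single i 1 ∈ s} := by
  intro m hm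
  have hcoeff : coeff m (pderiv i p) ≠ 0 := mem_support_iff.1 hm
  rw [coeff_pderiv] at hcoeff
  exact hp (mem_support_iff.2 (left_ne_zero_of_mul hcoeff))

lemma eval_update_of_mem_restrictSupport [DecidableEq σ] {i : σ}
    (hp : p ∈ restrictSupport R {m | m i = 0}) (x : σ → R) (t : R) :
    eval (Function.update x i t) p = eval x p := by
  rw [eval_eq, eval_eq]
  refine Finset.sum_congr rfl fun m hm => congrArg _ (Finset.prod_congr rfl fun k hk => ?_)
  have hki : k ≠ i := by
    rintro rfl
    exact Finsupp.mem_support_iff.1 hk (hp hm)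
  rw [Function.update_of_ne hki]

lemma exists_monomial_eq_X_pow_mul {m : σ →₀ ℕ} {i : σ} {n : ℕ} (hn : n ≤ m i) :
    ∃ m' : σ →₀ ℕ, m = Finsupp.single i n + m' ∧
      monomial m (1 : R) = X i ^ n * monomial m' 1 := by
  obtain ⟨m', rfl⟩ := exists_add_of_le (Finsupp.single_le_iff.2 hn)
  exact ⟨m', rfl, by rw [X_pow_eq_monomial, monomial_mul, one_mul]⟩

end RestrictSupport

section ShapeFunctions

variable {d : ℕ} {p q : MvPolynomial (Fin d) ℝ} {i j : Fin d}

lemma Q1_eq_restrictDegree (d : ℕ) : Q1 d = restrictDegree (Fin d) ℝ 1 := by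
  rw [restrictDegree, restrictSupport_eq_span, Q1]
  congr 1
  ext p
  simp only [Set.mem_ofPred_eq, Set.mem_image, eq_comm]

lemma monomial_mem_Q1 {α : Fin d →₀ ℕ} (hα : ∀ k, α k ≤ 1) : monomial α (1 : ℝ) ∈ Q1 d :=
  Submodule.subset_span ⟨α, hα, rfl⟩

lemma C_mem_Q1 (r : ℝ) : C r ∈ Q1 d := by
  have hone : (1 : MvPolynomial (Fin d) ℝ) ∈ Q1 d := monomial_mem_Q1 (α := 0) fun _ => zero_le_one
  simpa [smul_eq_C_mul] using Submodule.smul_mem _ r hone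

lemma Q1i_le_Q1 (i : Fin d) : Q1i d i ≤ Q1 d :=
  Submodule.span_mono fun _ ⟨α, hα, _, hp⟩ => ⟨α, hα, hp⟩

lemma X_mul_mem_Q1 (hq : q ∈ Q1i d i) : X i * q ∈ Q1 d := by
  suffices Q1i d i ≤ (Q1 d).comap (LinearMap.mulLeft ℝ (X i)) from this hq
  refine Submodule.span_le.2 ?_
  rintro _ ⟨α, hα, hαi, rfl⟩
  change X i * monomial α 1 ∈ Q1 d
  rw [X, monomial_mul, one_mul]
  refine monomial_mem_Q1 fun k => ?_
  obtain rfl | hk := eq_or_ne k i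
  · simp [hαi]
  · simpa [hk] using hα k

lemma X_mem_Q1 (i : Fin d) : X i ∈ Q1 d := by
  refine monomial_mem_Q1 fun k => ?_
  rw [Finsupp.single_apply]
  split_ifs <;> simp

lemma exists_Q1i_eq_add_X_mul (hq : q ∈ Q1 d) (i : Fin d) :
    ∃ r ∈ Q1i d i, ∃ s ∈ Q1i d i, q = r + X i * s := by
  suffices Q1 d ≤ Q1i d i ⊔ (Q1i d i).map (LinearMap.mulLeft ℝ (X i)) by
    obtain ⟨r, hr, _, ⟨s, hs, rfl⟩, rfl⟩ := Submodule.mem_sup.1 (this hq)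
    exact ⟨r, hr, s, hs, rfl⟩
  refine Submodule.span_le.2 ?_
  rintro _ ⟨α, hα, rfl⟩
  obtain hzero | hpos := Nat.eq_zero_or_pos (α i)
  · exact Submodule.mem_sup_left (Submodule.subset_span ⟨α, hα, hzero, rfl⟩)
  · obtain ⟨β, rfl, hmonomial⟩ := exists_monomial_eq_X_pow_mul (R := ℝ) (Nat.succ_le_of_lt hpos)
    have hβ : ∀ k, β k ≤ 1 := fun k => (Nat.le_add_left _ _).trans (hα k)
    have hβi : β i = 0 := by simpa using hα i
    rw [hmonomial, pow_one]
    exact Submodule.mem_sup_right ⟨_, Submodule.subset_span ⟨β, hβ, hβi, rfl⟩, rfl⟩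

lemma Q1_le_PA (d : ℕ) : Q1 d ≤ PA d :=
  le_sup_left

lemma X_sq_mul_mem_PA (i : Fin d) (hq : q ∈ Q1 d) : X i ^ 2 * q ∈ PA d :=
  Submodule.mem_sup_right (Submodule.subset_span ⟨i, q, hq, rfl⟩)

lemma X_mul_mem_PA (i : Fin d) (hq : q ∈ Q1 d) : X i * q ∈ PA d := by
  obtain ⟨r, hr, s, hs, rfl⟩ := exists_Q1i_eq_add_X_mul hq i
  rw [mul_add, ← mul_assoc, ← sq]
  exact add_mem (Q1_le_PA d (X_mul_mem_Q1 hr)) (X_sq_mul_mem_PA i (Q1i_le_Q1 i hs))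

open scoped Pointwise in
lemma PA_le_restrictSupport (hij : i ≠ j) :
    PA d ≤ restrictSupport ℝ {α | α i ≤ 1 ∨ α j ≤ 1} := by
  rw [PA, Q1_eq_restrictDegree]
  refine sup_le (restrictSupport_mono ℝ fun α hα => Or.inl (hα i)) (Submodule.span_le.2 ?_)
  rintro _ ⟨k, q, hq, rfl⟩
  have hX : (X k ^ 2 : MvPolynomial (Fin d) ℝ) ∈ restrictSupport ℝ {Finsupp.single k 2} := by
    simp [X_pow_eq_monomial]
  have hmul := Submodule.mul_mem_mul hX hq
  rw [restrictDegree, ← restrictSupport_add] at hmul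
  refine restrictSupport_mono ℝ ?_ hmul
  rintro _ ⟨_, rfl, α, hα, rfl⟩
  obtain rfl | hki := eq_or_ne k i
  · exact Or.inr (by simpa [Finsupp.single_apply, hij] using hα j)
  · exact Or.inl (by simpa [Finsupp.single_apply, hki] using hα i)

lemma exists_pderiv_pderiv_eq_add_of_mem_PA (hij : i ≠ j) (hp : p ∈ PA d) :
    ∃ f ∈ restrictSupport ℝ {α : Fin d →₀ ℕ | α i = 0},
      ∃ g ∈ restrictSupport ℝ {α : Fin d →₀ ℕ | α j = 0}, pderiv i (pderiv j p) = f + g := by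
  have hderiv : pderiv i (pderiv j p) ∈
      restrictSupport ℝ ({α : Fin d →₀ ℕ | α i = 0} ∪ {α | α j = 0}) := by
    refine restrictSupport_mono ℝ (fun α hα => ?_)
      (pderiv_mem_restrictSupport (pderiv_mem_restrictSupport (PA_le_restrictSupport hij hp) j) i)
    simpa [Finsupp.single_apply, hij, hij.symm] using hα
  rw [restrictSupport_union] at hderiv
  obtain ⟨f, hf, g, hg, hfg⟩ := Submodule.mem_sup.1 hderiv
  exact ⟨f, hf, g, hg, hfg.symm⟩

end ShapeFunctions

section Bubble

variable {σ R : Type*} [CommRing R]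

/-- The quadratic bubble `bᵢ = (xᵢ - cᵢ)² - hᵢ²`, vanishing on both faces `xᵢ = cᵢ ± hᵢ`. -/
noncomputable def bubble (c h : σ → R) (i : σ) : MvPolynomial σ R :=
  (X i - C (c i)) ^ 2 - C (h i ^ 2)

/-- The span of all products of two bubbles. For a polynomial of degree at most `4`, the Adini
interpolation error lies in this space. -/
noncomputable def bubbleProducts (c h : σ → R) : Submodule R (MvPolynomial σ R) :=
  Submodule.span R {p | ∃ k l : σ, p = bubble c h k * bubble c h l}

variable (c h : σ → R)

lemma X_sq_eq_bubble_add (i : σ) :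
    X i ^ 2 = bubble c h i + (C (2 * c i) * X i + C (h i ^ 2 - c i ^ 2)) := by
  simp only [bubble, map_sub, map_mul, map_pow, map_ofNat]
  ring

lemma pderiv_bubble [DecidableEq σ] (i k : σ) :
    pderiv k (bubble c h i) = C (if i = k then 2 else 0) * (X k - C (c k)) := by
  obtain rfl | hik := eq_or_ne i k
  · simp [bubble, map_ofNat]
  · simp [bubble, hik]

lemma pderiv_pderiv_bubble {i j : σ} (hij : i ≠ j) (k : σ) :
    pderiv i (pderiv j (bubble c h k)) = 0 := by
  classical
  rw [pderiv_bubble, pderiv_C_mul, map_sub, pderiv_X_of_ne hij.symm, pderiv_C, sub_zero, mul_zero]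

lemma pderiv_pderiv_mem_span_of_mem_bubbleProducts {i j : σ} (hij : i ≠ j)
    {s : MvPolynomial σ R} (hs : s ∈ bubbleProducts c h) :
    pderiv i (pderiv j s) ∈ Submodule.span R {(X i - C (c i)) * (X j - C (c j))} := by
  classical
  suffices bubbleProducts c h ≤ (Submodule.span R {(X i - C (c i)) * (X j - C (c j))}).comap
      ((pderiv i).toLinearMap ∘ₗ (pderiv j).toLinearMap) from this hs
  refine Submodule.span_le.2 ?_
  rintro _ ⟨k, l, rfl⟩
  have hmixed : pderiv i (pderiv j (bubble c h k * bubble c h l)) =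
      pderiv j (bubble c h k) * pderiv i (bubble c h l) +
        pderiv i (bubble c h k) * pderiv j (bubble c h l) := by
    simp only [pderiv_mul, map_add, pderiv_pderiv_bubble c h hij, zero_mul, mul_zero, zero_add,
      add_zero]
  let δ (m n : σ) : R := if m = n then 2 else 0
  refine Submodule.mem_span_singleton.2 ⟨δ k j * δ l i + δ k i * δ l j, ?_⟩
  change _ = pderiv i (pderiv j (bubble c h k * bubble c h l))
  simp only [hmixed, pderiv_bubble, smul_eq_C_mul, map_add, map_mul, δ]
  ring

end Bubble

section Interpolation

variable {d : ℕ} {c h : Fin d → ℝ}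

/-- The polynomials all of whose Adini degrees of freedom, the values and gradients at the vertices
of the rectangle, vanish. -/
noncomputable def adiniKernel (c h : Fin d → ℝ) : Submodule ℝ (MvPolynomial (Fin d) ℝ) where
  carrier := {p | ∀ a, IsVertex c h a → eval a p = 0 ∧ ∀ k, eval a (pderiv k p) = 0}
  zero_mem' := by simp
  add_mem' hp hq a ha := by
    simp [(hp a ha).1, (hp a ha).2, (hq a ha).1, (hq a ha).2]
  smul_mem' r p hp a ha := by
    simp [(hp a ha).1, (hp a ha).2, smul_eval]

lemma eval_bubble_of_isVertex {a : Fin d → ℝ} (ha : IsVertex c h a) (i : Fin d) :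
    eval a (bubble c h i) = 0 := by
  simp only [bubble, map_sub, map_pow, eval_X, eval_C]
  rcases ha i with hface | hface <;> rw [hface] <;> ring

lemma eval_pderiv_bubble_mul_of_isVertex {a : Fin d → ℝ} (ha : IsVertex c h a) (i k : Fin d)
    (q : MvPolynomial (Fin d) ℝ) :
    eval a (pderiv k (bubble c h i * q)) = if i = k then 2 * (a k - c k) * eval a q else 0 := by
  simp [pderiv_bubble, eval_bubble_of_isVertex ha, mul_comm]

lemma bubbleProducts_le_adiniKernel (c h : Fin d → ℝ) :
    bubbleProducts c h ≤ adiniKernel c h := by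
  refine Submodule.span_le.2 ?_
  rintro _ ⟨k, l, rfl⟩ a ha
  simp [eval_bubble_of_isVertex ha]

lemma eq_zero_of_mem_Q1_of_eval_isVertex (hh : ∀ i, h i ≠ 0) {q : MvPolynomial (Fin d) ℝ}
    (hq : q ∈ Q1 d) (hvertex : ∀ a, IsVertex c h a → eval a q = 0) : q = 0 := by
  rw [Q1_eq_restrictDegree, mem_restrictDegree] at hq
  refine eq_zero_of_eval_zero_at_prod_finset q (fun i => {c i - h i, c i + h i}) (fun i => ?_)
    fun a ha => hvertex a fun i => by simpa using ha i
  have hfaces : c i - h i ≠ c i + h i := fun heq => hh i (by linarith)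
  rw [Finset.card_pair hfaces]
  exact Nat.lt_succ_of_le (degreeOf_le_iff.2 fun m hm => hq m hm i)

lemma PA_le_Q1_sup_bubble_mul (c h : Fin d → ℝ) :
    PA d ≤ Q1 d ⊔ ⨆ i, (Q1 d).map (LinearMap.mulLeft ℝ (bubble c h i)) := by
  set S := Q1 d ⊔ ⨆ i, (Q1 d).map (LinearMap.mulLeft ℝ (bubble c h i))
  have hQ1 : Q1 d ≤ S := le_sup_left
  have hbubble (i : Fin d) {q : MvPolynomial (Fin d) ℝ} (hq : q ∈ Q1 d) : bubble c h i * q ∈ S :=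
    Submodule.mem_sup_right (Submodule.mem_iSup_of_mem i ⟨q, hq, rfl⟩)
  have hsq (i : Fin d) {q : MvPolynomial (Fin d) ℝ} (hq : q ∈ Q1 d) (hXq : X i * q ∈ S) :
      X i ^ 2 * q ∈ S := by
    rw [X_sq_eq_bubble_add c h, add_mul, add_mul, mul_assoc, C_mul', C_mul']
    exact add_mem (hbubble i hq) (add_mem (S.smul_mem _ hXq) (S.smul_mem _ (hQ1 hq)))
  have hX (i : Fin d) {q : MvPolynomial (Fin d) ℝ} (hq : q ∈ Q1 d) : X i * q ∈ S := by
    obtain ⟨r, hr, s, hs, rfl⟩ := exists_Q1i_eq_add_X_mul hq i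
    rw [mul_add, ← mul_assoc, ← sq]
    exact add_mem (hQ1 (X_mul_mem_Q1 hr)) (hsq i (Q1i_le_Q1 i hs) (hQ1 (X_mul_mem_Q1 hs)))
  refine sup_le hQ1 (Submodule.span_le.2 ?_)
  rintro _ ⟨i, q, hq, rfl⟩
  exact hsq i hq (hX i hq)

lemma exists_eq_add_sum_bubble_mul_of_mem_PA (c h : Fin d → ℝ) {p : MvPolynomial (Fin d) ℝ}
    (hp : p ∈ PA d) :
    ∃ q₀ ∈ Q1 d, ∃ q : Fin d → MvPolynomial (Fin d) ℝ,
      (∀ i, q i ∈ Q1 d) ∧ p = q₀ + ∑ i, bubble c h i * q i := by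
  obtain ⟨q₀, hq₀, s, hs, rfl⟩ := Submodule.mem_sup.1 (PA_le_Q1_sup_bubble_mul c h hp)
  obtain ⟨μ, rfl⟩ := (Submodule.mem_iSup_finset_iff_exists_sum (s := Finset.univ) _ s).1
    (by simpa using hs)
  choose q hq hμ using fun i => (μ i).2
  exact ⟨q₀, hq₀, q, hq, by simp only [← hμ, LinearMap.mulLeft_apply]⟩

lemma disjoint_PA_adiniKernel (hh : ∀ i, h i ≠ 0) : Disjoint (PA d) (adiniKernel c h) := by
  refine Submodule.disjoint_def.2 fun p hp hker => ?_
  obtain ⟨q₀, hq₀, q, hq, rfl⟩ := exists_eq_add_sum_bubble_mul_of_mem_PA c h hp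
  obtain rfl : q₀ = 0 := eq_zero_of_mem_Q1_of_eval_isVertex (c := c) hh hq₀ fun a ha => by
    simpa [eval_bubble_of_isVertex ha] using (hker a ha).1
  have hq_zero (k : Fin d) : q k = 0 := by
    refine eq_zero_of_mem_Q1_of_eval_isVertex (c := c) hh (hq k) fun a ha => ?_
    have hgrad : 2 * (a k - c k) * eval a (q k) = 0 := by
      simpa only [zero_add, map_sum, eval_pderiv_bubble_mul_of_isVertex ha, Finset.sum_ite_eq',
        Finset.mem_univ, if_true] using (hker a ha).2 k
    have hoff_center : a k - c k ≠ 0 := by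
      rcases ha k with hface | hface <;> simpa [hface] using hh k
    exact (mul_eq_zero.1 hgrad).resolve_left (mul_ne_zero two_ne_zero hoff_center)
  simp [hq_zero]

lemma X_sq_mul_X_sq_mem_PA_sup_bubbleProducts (c h : Fin d → ℝ) (i j : Fin d) :
    X i ^ 2 * X j ^ 2 ∈ PA d ⊔ bubbleProducts c h := by
  let ℓ (k : Fin d) : MvPolynomial (Fin d) ℝ := C (2 * c k) * X k + C (h k ^ 2 - c k ^ 2)
  have hℓ (k : Fin d) : ℓ k ∈ Q1 d := by
    simp only [ℓ, C_mul']
    exact add_mem (Submodule.smul_mem _ _ (X_mem_Q1 k)) (C_mem_Q1 _)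
  have hℓℓ : ℓ i * ℓ j ∈ PA d := by
    change (C (2 * c i) * X i + C (h i ^ 2 - c i ^ 2)) * ℓ j ∈ PA d
    rw [add_mul, mul_assoc, C_mul', C_mul']
    exact add_mem (Submodule.smul_mem _ _ (X_mul_mem_PA i (hℓ j)))
      (Submodule.smul_mem _ _ (Q1_le_PA d (hℓ j)))
  have hexpand : (X i ^ 2 * X j ^ 2 : MvPolynomial (Fin d) ℝ) =
      (X i ^ 2 * ℓ j + X j ^ 2 * ℓ i - ℓ i * ℓ j) + bubble c h i * bubble c h j := by
    rw [X_sq_eq_bubble_add c h i, X_sq_eq_bubble_add c h j]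
    ring
  rw [hexpand]
  refine Submodule.add_mem_sup (sub_mem (add_mem ?_ ?_) hℓℓ) (Submodule.subset_span ⟨i, j, rfl⟩)
  · exact X_sq_mul_mem_PA i (hℓ j)
  · exact X_sq_mul_mem_PA j (hℓ i)

lemma restrictTotalDegree_four_le_PA_sup_bubbleProducts (c h : Fin d → ℝ) :
    restrictTotalDegree (Fin d) ℝ 4 ≤ PA d ⊔ bubbleProducts c h := by
  rw [restrictTotalDegree, restrictSupport_eq_span, Submodule.span_le]
  rintro _ ⟨α, hα : α.degree ≤ 4, rfl⟩
  change monomial α (1 : ℝ) ∈ _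
  by_cases hα_multilinear : ∀ k, α k ≤ 1
  · exact Submodule.mem_sup_left (Q1_le_PA d (monomial_mem_Q1 hα_multilinear))
  push Not at hα_multilinear
  obtain ⟨i, hi⟩ := hα_multilinear
  obtain ⟨β, rfl, hαβ⟩ := exists_monomial_eq_X_pow_mul (R := ℝ) (Nat.succ_le_of_lt hi)
  rw [hαβ]
  by_cases hβ_multilinear : ∀ k, β k ≤ 1
  · exact Submodule.mem_sup_left (X_sq_mul_mem_PA i (monomial_mem_Q1 hβ_multilinear))
  push Not at hβ_multilinear
  obtain ⟨j, hj⟩ := hβ_multilinear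
  obtain ⟨γ, rfl, hβγ⟩ := exists_monomial_eq_X_pow_mul (R := ℝ) (Nat.succ_le_of_lt hj)
  obtain rfl : γ = 0 := by
    simp only [map_add, Finsupp.degree_single] at hα
    exact (Finsupp.degree_eq_zero_iff γ).1 (by lia)
  rw [hβγ, monomial_zero', C_1, mul_one]
  exact X_sq_mul_X_sq_mem_PA_sup_bubbleProducts c h i j

lemma sub_mem_bubbleProducts_of_mem_adiniKernel (hh : ∀ i, h i ≠ 0) {u w : MvPolynomial (Fin d) ℝ}
    (hu : u.totalDegree ≤ 4) (hw : w ∈ PA d) (hker : u - w ∈ adiniKernel c h) :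
    u - w ∈ bubbleProducts c h := by
  have hsup : u - w ∈ bubbleProducts c h ⊔ PA d := by
    rw [sup_comm]
    exact sub_mem (restrictTotalDegree_four_le_PA_sup_bubbleProducts c h
      ((mem_restrictTotalDegree _ _ _).2 hu)) (Submodule.mem_sup_left hw)
  have hmodular : (bubbleProducts c h ⊔ PA d) ⊓ adiniKernel c h = bubbleProducts c h := by
    rw [sup_inf_assoc_of_le _ (bubbleProducts_le_adiniKernel c h),
      (disjoint_PA_adiniKernel hh).eq_bot, sup_bot_eq]
  exact hmodular ▸ Submodule.mem_inf.2 ⟨hsup, hker⟩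

end Interpolation

section Reflection

lemma setIntegral_eq_zero_of_comp_eq_neg {Ω E : Type*} [MeasurableSpace Ω] {μ : Measure Ω}
    [NormedAddCommGroup E] [NormedSpace ℝ E] {T : Ω → Ω} (hT : MeasurePreserving T μ μ)
    (hinv : Function.Involutive T) {s : Set Ω} (hs : T ⁻¹' s = s) {f : Ω → E}
    (hf : ∀ x, f (T x) = -f x) : ∫ x in s, f x ∂μ = 0 := by
  have hT_emb : MeasurableEmbedding T :=
    (MeasurableEquiv.ofInvolutive T hinv hT.measurable).measurableEmbedding
  have hself : -∫ x in s, f x ∂μ = ∫ x in s, f x ∂μ := by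
    simpa only [hs, hf, integral_neg] using hT.setIntegral_preimage_emb hT_emb f s
  have : IsAddTorsionFree E := .of_isTorsionFree ℝ E
  exact neg_eq_self.1 hself

section CoordReflection

variable {ι : Type*} [DecidableEq ι]

/-- The reflection of `ι → ℝ` in the hyperplane `xᵢ = t`. -/
def coordReflection (i : ι) (t : ℝ) (x : ι → ℝ) : ι → ℝ :=
  Function.update x i (2 * t - x i)

lemma coordReflection_involutive (i : ι) (t : ℝ) : Function.Involutive (coordReflection i t) := by
  intro x
  simp [coordReflection]

lemma measurePreserving_coordReflection [Fintype ι] (i : ι) (t : ℝ) :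
    MeasurePreserving (coordReflection i t) := by
  let f (k : ι) : ℝ → ℝ := if k = i then fun s => 2 * t - s else id
  have hf (k : ι) : MeasurePreserving (f k) := by
    dsimp only [f]
    split_ifs
    · exact Measure.measurePreserving_sub_left volume (2 * t)
    · exact MeasurePreserving.id volume
  convert! volume_preserving_pi hf using 1
  ext x k
  obtain rfl | hk := eq_or_ne k i
  · simp [coordReflection, f]
  · simp [coordReflection, f, hk]

end CoordReflection

variable {d : ℕ}

lemma coordReflection_preimage_box (c h : Fin d → ℝ) (i : Fin d) :
    coordReflection i (c i) ⁻¹' box c h = box c h := by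
  ext x
  simp only [box, Set.mem_preimage, Set.mem_univ_pi]
  refine forall_congr' fun k => ?_
  obtain rfl | hk := eq_or_ne k i
  · simp only [coordReflection, Function.update_self, Set.mem_Icc]
    constructor <;> rintro ⟨hlower, hupper⟩ <;> constructor <;> linarith
  · simp only [coordReflection, Function.update_of_ne hk]

lemma setIntegral_box_sub_mul_eq_zero (c h : Fin d → ℝ) (i : Fin d) {f : (Fin d → ℝ) → ℝ}
    (hf : ∀ x t, f (Function.update x i t) = f x) :
    ∫ x in box c h, (x i - c i) * f x = 0 := by
  refine setIntegral_eq_zero_of_comp_eq_neg (measurePreserving_coordReflection i (c i))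
    (coordReflection_involutive i (c i)) (coordReflection_preimage_box c h i) fun x => ?_
  simp only [coordReflection, hf, Function.update_self]
  ring

lemma integrableOn_box_of_continuous (c h : Fin d → ℝ) {f : (Fin d → ℝ) → ℝ} (hf : Continuous f) :
    IntegrableOn f (box c h) :=
  hf.continuousOn.integrableOn_compact (isCompact_univ_pi fun _ => isCompact_Icc)

lemma setIntegral_box_sub_mul_sub_mul_eq_zero (c h : Fin d → ℝ) {i j : Fin d} (hij : i ≠ j)
    {g : MvPolynomial (Fin d) ℝ} (hg : g ∈ restrictSupport ℝ {α | α i = 0}) :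
    ∫ x in box c h, (x i - c i) * ((x j - c j) * eval x g) = 0 :=
  setIntegral_box_sub_mul_eq_zero c h i fun x t => by
    rw [eval_update_of_mem_restrictSupport hg, Function.update_of_ne hij.symm]

lemma setIntegral_box_sub_mul_sub_mul_pderiv_pderiv_eq_zero (c h : Fin d → ℝ) {i j : Fin d}
    (hij : i ≠ j) {v : MvPolynomial (Fin d) ℝ} (hv : v ∈ PA d) :
    ∫ x in box c h, (x i - c i) * ((x j - c j) * eval x (pderiv i (pderiv j v))) = 0 := by
  obtain ⟨f, hf, g, hg, hfg⟩ := exists_pderiv_pderiv_eq_add_of_mem_PA hij hv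
  have hintegrable (p : MvPolynomial (Fin d) ℝ) :
      IntegrableOn (fun x => (x i - c i) * ((x j - c j) * eval x p)) (box c h) :=
    integrableOn_box_of_continuous c h (by have := continuous_eval p; fun_prop)
  have hg_zero : ∫ x in box c h, (x i - c i) * ((x j - c j) * eval x g) = 0 := by
    simpa only [mul_left_comm] using setIntegral_box_sub_mul_sub_mul_eq_zero c h hij.symm hg
  simp only [hfg, map_add, mul_add]
  rw [integral_add (hintegrable f) (hintegrable g),
    setIntegral_box_sub_mul_sub_mul_eq_zero c h hij hf, hg_zero, add_zero]

end Reflection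

/-- for `u` of total degree at most 4, `v ∈ P_A`, and `w ∈ P_A` the Adini
canonical interpolant of `u`, the mixed terms vanish:
`∫_K ∂²(u−w)/∂x_i∂x_j ∂²v/∂x_i∂x_j = 0` for all `i ≠ j`. -/
theorem adini_mixed_terms_vanish (d : ℕ) (hd : 1 ≤ d)
    (c h : Fin d → ℝ) (hh : ∀ i, 0 < h i)
    (u : MvPolynomial (Fin d) ℝ) (hu : u.totalDegree ≤ 4)
    (v : MvPolynomial (Fin d) ℝ) (hv : v ∈ PA d)
    (w : MvPolynomial (Fin d) ℝ) (hw : w ∈ PA d)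
    (hmatch : ∀ a : Fin d → ℝ, IsVertex c h a →
      eval a w = eval a u ∧ ∀ k : Fin d, eval a (pderiv k w) = eval a (pderiv k u)) :
    ∀ i j : Fin d, i ≠ j →
      ∫ x in box c h,
        eval x (pderiv i (pderiv j (u - w))) * eval x (pderiv i (pderiv j v)) = 0 := by
  intro i j hij
  have hker : u - w ∈ adiniKernel c h := fun a ha => by
    simp [(hmatch a ha).1, (hmatch a ha).2]
  obtain ⟨r, hr⟩ := Submodule.mem_span_singleton.1 <|
    pderiv_pderiv_mem_span_of_mem_bubbleProducts c h hij <|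
      sub_mem_bubbleProducts_of_mem_adiniKernel (fun k => (hh k).ne') hu hw hker
  calc
    _ = ∫ x in box c h, r * ((x i - c i) * ((x j - c j) * eval x (pderiv i (pderiv j v)))) := by
      rw [← hr]
      simp only [smul_eval, map_mul, map_sub, eval_X, eval_C, mul_assoc]
    _ = 0 := by
      rw [integral_const_mul, setIntegral_box_sub_mul_sub_mul_pderiv_pderiv_eq_zero c h hij hv,
        mul_zero]
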